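/- Let P be a joint distribution on 𝒳 × 𝒴 × 𝒵 under which Y and Z are conditionally independent given X (MI_P(Y:Z|X) = 0) and Y and Z are independent (MI_P(Y:Z) = 0). Then S̃I(X:Y;Z) = 0. -/

import Mathlib

/-!
The co-information has the two expressions `MI(X:Y) − MI(X:Y|Z) = MI(Y:Z) − MI(Y:Z|X)`
(`coI_eq`), so `CoI_P = 0` under the hypotheses, and `P ∈ Δ_P`. It remains to see that
`CoI_Q ≤ 0` for every `Q ∈ Δ_P`.

Both hypotheses are equality cases of Gibbs' inequality (`gibbs_eq`): they say that
`P(x,y,z) = P(x,y) P(x,z) / P(x)` and `P(y,z) = P(y) P(z)`. For `Q ∈ Δ_P` put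
`R(x,y,z) = P(x,y,z) Q(y,z) / (P(y) P(z))`. Since `Q` and `P` share their `(X,Y)` and `(X,Z)`
marginals, the first identity gives `CoI_Q = -∑ Q log (Q / R)`, and summing over `x` the second one
gives `∑ R ≤ ∑_{y,z} Q(y,z) = 1`. Gibbs' inequality (`gibbs_le`) then yields `CoI_Q ≤ 0`.
-/

open scoped BigOperators
open Real

namespace PID

variable {𝒳 𝒴 𝒵 : Type*} [Fintype 𝒳] [Fintype 𝒴] [Fintype 𝒵]

/-- A joint distribution on `𝒳 × 𝒴 × 𝒵`: nonnegative values summing to 1. -/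
def IsDist (P : 𝒳 × 𝒴 × 𝒵 → ℝ) : Prop :=
  (∀ p, 0 ≤ P p) ∧ ∑ p, P p = 1

noncomputable def margX (P : 𝒳 × 𝒴 × 𝒵 → ℝ) (x : 𝒳) : ℝ := ∑ y, ∑ z, P (x, y, z)
noncomputable def margY (P : 𝒳 × 𝒴 × 𝒵 → ℝ) (y : 𝒴) : ℝ := ∑ x, ∑ z, P (x, y, z)
noncomputable def margZ (P : 𝒳 × 𝒴 × 𝒵 → ℝ) (z : 𝒵) : ℝ := ∑ x, ∑ y, P (x, y, z)
noncomputable def margXY (P : 𝒳 × 𝒴 × 𝒵 → ℝ) (x : 𝒳) (y : 𝒴) : ℝ := ∑ z, P (x, y, z)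
noncomputable def margXZ (P : 𝒳 × 𝒴 × 𝒵 → ℝ) (x : 𝒳) (z : 𝒵) : ℝ := ∑ y, P (x, y, z)
noncomputable def margYZ (P : 𝒳 × 𝒴 × 𝒵 → ℝ) (y : 𝒴) (z : 𝒵) : ℝ := ∑ x, P (x, y, z)

/-- Mutual information `MI(X:Y)`. -/
noncomputable def miXY (P : 𝒳 × 𝒴 × 𝒵 → ℝ) : ℝ :=
  ∑ x, ∑ y, margXY P x y * Real.log (margXY P x y / (margX P x * margY P y))

/-- Mutual information `MI(X:Z)`. -/
noncomputable def miXZ (P : 𝒳 × 𝒴 × 𝒵 → ℝ) : ℝ :=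
  ∑ x, ∑ z, margXZ P x z * Real.log (margXZ P x z / (margX P x * margZ P z))

/-- Mutual information `MI(Y:Z)`. -/
noncomputable def miYZ (P : 𝒳 × 𝒴 × 𝒵 → ℝ) : ℝ :=
  ∑ y, ∑ z, margYZ P y z * Real.log (margYZ P y z / (margY P y * margZ P z))

/-- Mutual information `MI(X:(Y,Z))`. -/
noncomputable def miXYZ (P : 𝒳 × 𝒴 × 𝒵 → ℝ) : ℝ :=
  ∑ x, ∑ y, ∑ z, P (x, y, z) * Real.log (P (x, y, z) / (margX P x * margYZ P y z))

/-- Conditional mutual information `MI(X:Y|Z)`. -/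
noncomputable def miXY_Z (P : 𝒳 × 𝒴 × 𝒵 → ℝ) : ℝ :=
  ∑ x, ∑ y, ∑ z, P (x, y, z) *
    Real.log (P (x, y, z) * margZ P z / (margXZ P x z * margYZ P y z))

/-- Conditional mutual information `MI(X:Z|Y)`. -/
noncomputable def miXZ_Y (P : 𝒳 × 𝒴 × 𝒵 → ℝ) : ℝ :=
  ∑ x, ∑ y, ∑ z, P (x, y, z) *
    Real.log (P (x, y, z) * margY P y / (margXY P x y * margYZ P y z))

/-- Conditional mutual information `MI(Y:Z|X)`. -/
noncomputable def miYZ_X (P : 𝒳 × 𝒴 × 𝒵 → ℝ) : ℝ :=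
  ∑ x, ∑ y, ∑ z, P (x, y, z) *
    Real.log (P (x, y, z) * margX P x / (margXY P x y * margXZ P x z))

/-- Conditional entropy `H(X|Y,Z)`. -/
noncomputable def hX_YZ (P : 𝒳 × 𝒴 × 𝒵 → ℝ) : ℝ :=
  -∑ x, ∑ y, ∑ z, P (x, y, z) * Real.log (P (x, y, z) / margYZ P y z)

/-- Conditional entropy `H(X|Z)`. -/
noncomputable def hX_Z (P : 𝒳 × 𝒴 × 𝒵 → ℝ) : ℝ :=
  -∑ x, ∑ z, margXZ P x z * Real.log (margXZ P x z / margZ P z)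

/-- Conditional entropy `H(Y|Z)`. -/
noncomputable def hY_Z (P : 𝒳 × 𝒴 × 𝒵 → ℝ) : ℝ :=
  -∑ y, ∑ z, margYZ P y z * Real.log (margYZ P y z / margZ P z)

/-- Conditional entropy `H(Z|Y)`. -/
noncomputable def hZ_Y (P : 𝒳 × 𝒴 × 𝒵 → ℝ) : ℝ :=
  -∑ y, ∑ z, margYZ P y z * Real.log (margYZ P y z / margY P y)

/-- Co-information `CoI(X;Y;Z) = MI(X:Y) − MI(X:Y|Z)`. -/
noncomputable def coI (P : 𝒳 × 𝒴 × 𝒵 → ℝ) : ℝ := miXY P - miXY_Z P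

/-- `Δ_P`: the joint distributions with the same pair marginals as `P` on `(X,Y)` and `(X,Z)`. -/
def ΔP (P : 𝒳 × 𝒴 × 𝒵 → ℝ) : Set (𝒳 × 𝒴 × 𝒵 → ℝ) :=
  {Q | IsDist Q ∧ (∀ x y, margXY Q x y = margXY P x y) ∧ ∀ x z, margXZ Q x z = margXZ P x z}

/-- `ŨI(X:Y∖Z) = min_{Q ∈ Δ_P} MI_Q(X:Y|Z)`. -/
noncomputable def UIY (P : 𝒳 × 𝒴 × 𝒵 → ℝ) : ℝ := sInf (miXY_Z '' ΔP P)

/-- `ŨI(X:Z∖Y) = min_{Q ∈ Δ_P} MI_Q(X:Z|Y)`. -/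
noncomputable def UIZ (P : 𝒳 × 𝒴 × 𝒵 → ℝ) : ℝ := sInf (miXZ_Y '' ΔP P)

/-- `S̃I(X:Y;Z) = max_{Q ∈ Δ_P} CoI_Q(X;Y;Z)`. -/
noncomputable def SI (P : 𝒳 × 𝒴 × 𝒵 → ℝ) : ℝ := sSup (coI '' ΔP P)

/-- `C̃I(X:Y;Z) = MI_P(X:(Y,Z)) − min_{Q ∈ Δ_P} MI_Q(X:(Y,Z))`. -/
noncomputable def CI (P : 𝒳 × 𝒴 × 𝒵 → ℝ) : ℝ := miXYZ P - sInf (miXYZ '' ΔP P)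

/-- The pointwise form of Gibbs' inequality, with its equality case. -/
lemma gibbs_pointwise {p q : ℝ} (hp : 0 ≤ p) (hq : 0 ≤ q) (hpq : 0 < p → 0 < q) :
    p - q ≤ p * Real.log (p / q) ∧ (p * Real.log (p / q) = p - q → p = q) := by
  rcases hp.eq_or_lt with rfl | hp'
  · simp only [zero_mul, zero_sub, Left.neg_nonpos_iff]
    exact ⟨hq, fun h => by linarith⟩
  have hq' := hpq hp'
  have hr : 0 < q / p := by positivity
  have hlog : Real.log (p / q) = -Real.log (q / p) := by
    rw [← Real.log_inv, inv_div]
  have hmul : p * (q / p - 1) = q - p := by field_simp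
  rw [hlog]
  constructor
  · have := mul_le_mul_of_nonneg_left (Real.log_le_sub_one_of_pos hr) hp
    linarith
  · intro h
    by_contra hne
    have h1 : q / p ≠ 1 := fun h1 => hne ((div_eq_one_iff_eq hp'.ne').1 h1).symm
    have := mul_lt_mul_of_pos_left (Real.log_lt_sub_one_of_pos hr h1) hp'
    linarith

lemma gibbs_le {ι : Type*} [Fintype ι] {p q : ι → ℝ} (hp : ∀ i, 0 ≤ p i) (hq : ∀ i, 0 ≤ q i)
    (hpq : ∀ i, 0 < p i → 0 < q i) (hsum : ∑ i, q i ≤ ∑ i, p i) :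
    0 ≤ ∑ i, p i * Real.log (p i / q i) := by
  have h := Finset.sum_le_sum fun i (_ : i ∈ Finset.univ) =>
    (gibbs_pointwise (hp i) (hq i) (hpq i)).1
  rw [Finset.sum_sub_distrib] at h
  linarith

lemma gibbs_eq {ι : Type*} [Fintype ι] {p q : ι → ℝ} (hp : ∀ i, 0 ≤ p i) (hq : ∀ i, 0 ≤ q i)
    (hpq : ∀ i, 0 < p i → 0 < q i) (hsum : ∑ i, q i = ∑ i, p i)
    (h0 : ∑ i, p i * Real.log (p i / q i) = 0) (i : ι) : p i = q i := by
  have h : ∑ i, (p i - q i) = ∑ i, p i * Real.log (p i / q i) := by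
    rw [Finset.sum_sub_distrib]; linarith
  have := (Finset.sum_eq_sum_iff_of_le fun i _ =>
    (gibbs_pointwise (hp i) (hq i) (hpq i)).1).1 h i (Finset.mem_univ i)
  exact (gibbs_pointwise (hp i) (hq i) (hpq i)).2 this.symm

section Marginals

variable {P : 𝒳 × 𝒴 × 𝒵 → ℝ}

lemma le_margXY (hP : ∀ p, 0 ≤ P p) (x : 𝒳) (y : 𝒴) (z : 𝒵) : P (x, y, z) ≤ margXY P x y :=
  Finset.single_le_sum (f := fun z => P (x, y, z)) (fun _ _ => hP _) (Finset.mem_univ z)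

lemma le_margXZ (hP : ∀ p, 0 ≤ P p) (x : 𝒳) (y : 𝒴) (z : 𝒵) : P (x, y, z) ≤ margXZ P x z :=
  Finset.single_le_sum (f := fun y => P (x, y, z)) (fun _ _ => hP _) (Finset.mem_univ y)

lemma le_margYZ (hP : ∀ p, 0 ≤ P p) (x : 𝒳) (y : 𝒴) (z : 𝒵) : P (x, y, z) ≤ margYZ P y z :=
  Finset.single_le_sum (f := fun x => P (x, y, z)) (fun _ _ => hP _) (Finset.mem_univ x)

lemma margXY_nonneg (hP : ∀ p, 0 ≤ P p) (x : 𝒳) (y : 𝒴) : 0 ≤ margXY P x y :=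
  Finset.sum_nonneg fun _ _ => hP _

lemma margXZ_nonneg (hP : ∀ p, 0 ≤ P p) (x : 𝒳) (z : 𝒵) : 0 ≤ margXZ P x z :=
  Finset.sum_nonneg fun _ _ => hP _

lemma margYZ_nonneg (hP : ∀ p, 0 ≤ P p) (y : 𝒴) (z : 𝒵) : 0 ≤ margYZ P y z :=
  Finset.sum_nonneg fun _ _ => hP _

lemma margX_eq_sum_margXZ (x : 𝒳) : margX P x = ∑ z, margXZ P x z := Finset.sum_comm

lemma margY_eq_sum_margYZ (y : 𝒴) : margY P y = ∑ z, margYZ P y z := Finset.sum_comm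

lemma margZ_eq_sum_margYZ (z : 𝒵) : margZ P z = ∑ y, margYZ P y z := Finset.sum_comm

lemma margX_nonneg (hP : ∀ p, 0 ≤ P p) (x : 𝒳) : 0 ≤ margX P x :=
  Finset.sum_nonneg fun _ _ => margXY_nonneg hP _ _

lemma margY_nonneg (hP : ∀ p, 0 ≤ P p) (y : 𝒴) : 0 ≤ margY P y :=
  Finset.sum_nonneg fun _ _ => margXY_nonneg hP _ _

lemma margZ_nonneg (hP : ∀ p, 0 ≤ P p) (z : 𝒵) : 0 ≤ margZ P z :=
  Finset.sum_nonneg fun _ _ => margXZ_nonneg hP _ _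

lemma margXY_le_margX (hP : ∀ p, 0 ≤ P p) (x : 𝒳) (y : 𝒴) : margXY P x y ≤ margX P x :=
  Finset.single_le_sum (f := fun y => margXY P x y) (fun _ _ => margXY_nonneg hP _ _)
    (Finset.mem_univ y)

lemma margYZ_le_margY (hP : ∀ p, 0 ≤ P p) (y : 𝒴) (z : 𝒵) : margYZ P y z ≤ margY P y := by
  rw [margY_eq_sum_margYZ]
  exact Finset.single_le_sum (f := fun z => margYZ P y z) (fun _ _ => margYZ_nonneg hP _ _)
    (Finset.mem_univ z)

lemma margYZ_le_margZ (hP : ∀ p, 0 ≤ P p) (y : 𝒴) (z : 𝒵) : margYZ P y z ≤ margZ P z := by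
  rw [margZ_eq_sum_margYZ]
  exact Finset.single_le_sum (f := fun y => margYZ P y z) (fun _ _ => margYZ_nonneg hP _ _)
    (Finset.mem_univ y)

lemma sum_margX (hP : IsDist P) : ∑ x, margX P x = 1 := by
  rw [← hP.2]; simp only [Fintype.sum_prod_type, margX]

lemma sum_margY (hP : IsDist P) : ∑ y, margY P y = 1 := by
  rw [← sum_margX hP]; exact Finset.sum_comm

lemma sum_margYZ (hP : IsDist P) : ∑ y, ∑ z, margYZ P y z = 1 := by
  simp only [← margY_eq_sum_margYZ, sum_margY hP]

lemma sum_margZ (hP : IsDist P) : ∑ z, margZ P z = 1 := by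
  rw [← sum_margYZ hP, Finset.sum_comm]
  simp only [margZ_eq_sum_margYZ]

/-- All marginals are positive at a point of positive mass. -/
lemma marg_pos (hP : ∀ p, 0 ≤ P p) {x : 𝒳} {y : 𝒴} {z : 𝒵} (h : 0 < P (x, y, z)) :
    0 < margX P x ∧ 0 < margY P y ∧ 0 < margZ P z ∧
      0 < margXY P x y ∧ 0 < margXZ P x z ∧ 0 < margYZ P y z := by
  have hxy := h.trans_le (le_margXY hP x y z)
  have hyz := h.trans_le (le_margYZ hP x y z)
  exact ⟨hxy.trans_le (margXY_le_margX hP x y), hyz.trans_le (margYZ_le_margY hP y z),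
    hyz.trans_le (margYZ_le_margZ hP y z), hxy, h.trans_le (le_margXZ hP x y z), hyz⟩

end Marginals

lemma miXY_eq (Q : 𝒳 × 𝒴 × 𝒵 → ℝ) : miXY Q =
    ∑ x, ∑ y, ∑ z, Q (x, y, z) * Real.log (margXY Q x y / (margX Q x * margY Q y)) := by
  simp only [← Finset.sum_mul]; rfl

lemma miYZ_eq (Q : 𝒳 × 𝒴 × 𝒵 → ℝ) : miYZ Q =
    ∑ x, ∑ y, ∑ z, Q (x, y, z) * Real.log (margYZ Q y z / (margY Q y * margZ Q z)) := by
  rw [Finset.sum_comm]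
  refine Finset.sum_congr rfl fun y _ => ?_
  rw [Finset.sum_comm]
  simp only [← Finset.sum_mul]; rfl

/-- Symmetry of the co-information: `MI(X:Y) − MI(X:Y|Z) = MI(Y:Z) − MI(Y:Z|X)`. -/
lemma coI_eq {Q : 𝒳 × 𝒴 × 𝒵 → ℝ} (hQ : ∀ p, 0 ≤ Q p) : coI Q = miYZ Q - miYZ_X Q := by
  rw [coI, miXY_eq, miYZ_eq, miXY_Z, miYZ_X]
  simp only [← Finset.sum_sub_distrib]
  refine Finset.sum_congr rfl fun x _ => Finset.sum_congr rfl fun y _ =>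
    Finset.sum_congr rfl fun z _ => ?_
  rcases (hQ (x, y, z)).eq_or_lt with h | h
  · simp [← h]
  obtain ⟨h1, h2, h3, h4, h5, h6⟩ := marg_pos hQ h
  rw [Real.log_div, Real.log_div, Real.log_div, Real.log_div] <;> try positivity
  rw [Real.log_mul, Real.log_mul, Real.log_mul, Real.log_mul, Real.log_mul, Real.log_mul]
    <;> first | positivity | ring

/-- Vanishing of `MI(Y:Z)` forces `Y` and `Z` to be independent. -/
lemma margYZ_eq_of_indep {P : 𝒳 × 𝒴 × 𝒵 → ℝ} (hP : IsDist P) (h : miYZ P = 0) (y : 𝒴) (z : 𝒵) :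
    margYZ P y z = margY P y * margZ P z := by
  refine gibbs_eq (p := fun i : 𝒴 × 𝒵 => margYZ P i.1 i.2)
    (q := fun i => margY P i.1 * margZ P i.2) (fun i => margYZ_nonneg hP.1 _ _)
    (fun i => mul_nonneg (margY_nonneg hP.1 _) (margZ_nonneg hP.1 _))
    (fun i hi => mul_pos (hi.trans_le (margYZ_le_margY hP.1 _ _))
      (hi.trans_le (margYZ_le_margZ hP.1 _ _))) ?_ ?_ (y, z)
  · simp only [Fintype.sum_prod_type, sum_margYZ hP, ← Finset.mul_sum, sum_margZ hP, mul_one,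
      sum_margY hP]
  · simp only [Fintype.sum_prod_type]; exact h

/-- Vanishing of `MI(Y:Z|X)` forces `Y` and `Z` to be independent given `X`. -/
lemma eq_of_condIndep {P : 𝒳 × 𝒴 × 𝒵 → ℝ} (hP : IsDist P) (h : miYZ_X P = 0)
    (x : 𝒳) (y : 𝒴) (z : 𝒵) : P (x, y, z) = margXY P x y * margXZ P x z / margX P x := by
  refine gibbs_eq (p := P)
    (q := fun i => margXY P i.1 i.2.1 * margXZ P i.1 i.2.2 / margX P i.1) hP.1
    (fun i => div_nonneg (mul_nonneg (margXY_nonneg hP.1 _ _) (margXZ_nonneg hP.1 _ _))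
      (margX_nonneg hP.1 _)) ?_ ?_ ?_ (x, y, z)
  · rintro ⟨x, y, z⟩ hi
    obtain ⟨h1, -, -, h4, h5, -⟩ := marg_pos hP.1 hi
    dsimp only
    positivity
  · rw [hP.2, ← sum_margX hP, Fintype.sum_prod_type]
    refine Finset.sum_congr rfl fun x _ => ?_
    simp only [Fintype.sum_prod_type, ← Finset.sum_div, ← Finset.mul_sum,
      ← margX_eq_sum_margXZ, ← Finset.sum_mul]
    exact mul_self_div_self (margX P x)
  · simp only [Fintype.sum_prod_type, div_div_eq_mul_div]; exact h

/-- if `Y ⊥ Z | X` and `Y ⊥ Z` under `P`, then `S̃I(X:Y;Z) = 0`. -/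
theorem stmt8 [Nonempty 𝒳] [Nonempty 𝒴] [Nonempty 𝒵]
    (P : 𝒳 × 𝒴 × 𝒵 → ℝ) (hP : IsDist P)
    (hcondindep : miYZ_X P = 0) (hindep : miYZ P = 0) :
    SI P = 0 := by
  refine IsGreatest.csSup_eq ⟨⟨P, ⟨hP, fun _ _ => rfl, fun _ _ => rfl⟩, ?_⟩, ?_⟩
  · rw [coI_eq hP.1, hcondindep, hindep, sub_zero]
  rintro _ ⟨Q, ⟨hQ, hXY, hXZ⟩, rfl⟩
  have hX : ∀ x, margX Q x = margX P x := fun x => Finset.sum_congr rfl fun y _ => hXY x y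
  have hY : ∀ y, margY Q y = margY P y := fun y => Finset.sum_congr rfl fun x _ => hXY x y
  have hZ : ∀ z, margZ Q z = margZ P z := fun z => Finset.sum_congr rfl fun x _ => hXZ x z
  let R : 𝒳 × 𝒴 × 𝒵 → ℝ := fun i =>
    P i * (margYZ Q i.2.1 i.2.2 / (margY P i.2.1 * margZ P i.2.2))
  have hPpos : ∀ x y z, 0 < Q (x, y, z) → 0 < P (x, y, z) := by
    intro x y z h
    obtain ⟨h1, -, -, h4, h5, -⟩ := marg_pos hQ.1 h
    rw [eq_of_condIndep hP hcondindep, ← hXY, ← hXZ, ← hX]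
    positivity
  have key : 0 ≤ ∑ i, Q i * Real.log (Q i / R i) := by
    refine gibbs_le hQ.1 (fun i => mul_nonneg (hP.1 i) (div_nonneg (margYZ_nonneg hQ.1 _ _)
      (mul_nonneg (margY_nonneg hP.1 _) (margZ_nonneg hP.1 _)))) ?_ ?_
    · rintro ⟨x, y, z⟩ h
      have hp := hPpos x y z h
      obtain ⟨-, h2, h3, -, -, -⟩ := marg_pos hP.1 hp
      obtain ⟨-, -, -, -, -, h6⟩ := marg_pos hQ.1 h
      simp only [R]
      positivity
    · rw [hQ.2, ← sum_margYZ hQ, Fintype.sum_prod_type_right, Fintype.sum_prod_type]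
      refine Finset.sum_le_sum fun y _ => Finset.sum_le_sum fun z _ => ?_
      simp only [R, ← Finset.sum_mul]
      change margYZ P y z * _ ≤ _
      rw [margYZ_eq_of_indep hP hindep, mul_div_left_comm]
      -- only `≤ 1`, since the quotient is `0` where `P(y) P(z) = 0`
      exact mul_le_of_le_one_right (margYZ_nonneg hQ.1 _ _) (div_self_le_one _)
  have hco : coI Q = -∑ i, Q i * Real.log (Q i / R i) := by
    rw [coI_eq hQ.1, miYZ_eq, miYZ_X]
    simp only [Fintype.sum_prod_type, ← Finset.sum_sub_distrib, ← Finset.sum_neg_distrib]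
    refine Finset.sum_congr rfl fun x _ => Finset.sum_congr rfl fun y _ =>
      Finset.sum_congr rfl fun z _ => ?_
    rcases (hQ.1 (x, y, z)).eq_or_lt with h | h
    · simp [← h]
    obtain ⟨h1, h2, h3, h4, h5, h6⟩ := marg_pos hQ.1 h
    simp only [R]
    rw [eq_of_condIndep hP hcondindep, ← hXY, ← hXZ, ← hX, ← hY, ← hZ, ← mul_sub, ← mul_neg,
      ← Real.log_div (by positivity) (by positivity), ← Real.log_inv]
    congr 2
    field_simp
  rw [hco]
  linarith

end PID
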